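/- arXiv:2311.11663 — 3 statements merged into one kernel-verified Lean document; each statement's English description precedes it below -/
import Mathlib

section
/- There exists a constant c₃ > 0 such that the following holds. Let (Con, Red) be a black-box HF⇒(1/2+ε)-HF proof with parameters (ℓ, ℓ', a) whose reduction makes q queries. If 0 < ε ≤ 1/10 and ℓ' ≥ log₂(1/ε²) + c₃, then q ≥ (ℓ − log₂(2a))/3. -/
open scoped BigOperators

attribute [local instance] Classical.propDecidable

noncomputable section

/-- Probability that a uniformly random element of a finite type satisfies `P`. -/
def uPr {X : Type*} [Fintype X] (P : X → Prop) : ℝ :=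
  (Fintype.card {x : X // P x} : ℝ) / (Fintype.card X : ℝ)

/-- Probability of `P` under `t` i.i.d. bits, each equal to `true` with probability `p`. -/
def bPr {t : ℕ} (p : ℝ) (P : (Fin t → Bool) → Prop) : ℝ :=
  ∑ x : Fin t → Bool, if P x then (∏ i, if x i then p else 1 - p) else 0

/-- An adaptive `q`-query oracle procedure with input set `I` and query set `Q`. -/
structure OracleProc (q : ℕ) (I : Type*) (Q : Type*) where
  qry : (i : Fin q) → I → (Fin i.val → Bool) → Q
  out : I → (Fin q → Bool) → Bool

/-- The answer to the `i`-th query when running with oracle `D` on input `w`. -/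
def OracleProc.ans {q : ℕ} {I Q : Type*} (P : OracleProc q I Q) (D : Q → Bool) (w : I)
    (i : Fin q) : Bool :=
  D (P.qry i w (fun j => P.ans D w ⟨j.val, j.isLt.trans i.isLt⟩))
termination_by i.val
decreasing_by exact j.isLt

/-- The output of the oracle procedure, with oracle `D`, on input `w`. -/
def OracleProc.run {q : ℕ} {I Q : Type*} (P : OracleProc q I Q) (D : Q → Bool) (w : I) : Bool :=
  P.out w (P.ans D w)

/-- A clause over `n` Boolean variables: a list of literals (variable, polarity). -/
abbrev BClause (n : ℕ) := List (Fin n × Bool)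

/-- A CNF over `n` Boolean variables: a list of clauses. -/
abbrev BCNF (n : ℕ) := List (BClause n)

def BClause.eval {n : ℕ} (c : BClause n) (x : Fin n → Bool) : Bool :=
  c.any (fun l => x l.1 == l.2)

def BCNF.eval {n : ℕ} (φ : BCNF n) (x : Fin n → Bool) : Bool :=
  φ.all (fun c => BClause.eval c x)

/-- A `q`-CNF: every clause has at most `q` literals. -/
def BCNF.width {n : ℕ} (φ : BCNF n) (q : ℕ) : Prop :=
  ∀ c ∈ φ, c.length ≤ q

/-- Hamming weight. -/
def wt {n : ℕ} (x : Fin n → Bool) : ℕ :=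
  (Finset.univ.filter (fun i => x i = true)).card

/-- The set of free (`*`) positions of a restriction. -/
def freeSet {n : ℕ} (ρ : Fin n → Option Bool) : Finset (Fin n) :=
  Finset.univ.filter (fun i => ρ i = none)

/-- The number of free positions of a restriction. -/
def freeCount {n : ℕ} (ρ : Fin n → Option Bool) : ℕ := (freeSet ρ).card

/-- Fill the free positions of a restriction `ρ` with the bits of `x`, in order. -/
def Fill {n t : ℕ} (ρ : Fin n → Option Bool) (h : freeCount ρ = t)
    (x : Fin t → Bool) : Fin n → Bool := fun i =>
  if hm : i ∈ freeSet ρ then x (((freeSet ρ).orderIsoOfFin h).symm ⟨i, hm⟩)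
  else (ρ i).getD false

/-- The restrictions on `n` variables with exactly `t` free positions. -/
abbrev Restr (n t : ℕ) := {ρ : Fin n → Option Bool // freeCount ρ = t}

/-- Relative Hamming distance. -/
def relDist {n : ℕ} (x y : Fin n → Bool) : ℝ :=
  ((Finset.univ.filter (fun i => x i ≠ y i)).card : ℝ) / n

end

/-! Let the oracle `D` agree with `Con f` at each point independently with probability `2 / 3`. By
Chebyshev, `D` agrees with `Con f` on a fraction at least `3 / 5` of the points with probability at
least `1 / 2`, and then some advice string makes the reduction compute `f`.

On the other hand, fix an advice string and regard the output on each input as a function of `D`.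
Call the queries of two runs on the same input with different outputs a conflict. Either there are
many disjoint conflicts, and each of them independently has probability at least `(1 / 3) ^ q` of
forcing a wrong output, whatever `f` is; or few positions meet every conflict, and fixing the values
of `D` there makes every conflict smaller. After at most `2 * q` rounds of fixing, no conflict is
left and the reduction computes a single function. So, apart from few exceptions `f`, the reduction
computes `f` with tiny probability, and counting provides an `f` that is exceptional for no advice
string. -/

open MeasureTheory ProbabilityTheory Function

variable {X Y α β : Type*}

section Certificates

/-- `C` certifies `g`: on every input `D`, the entries of `D` at the positions `C D` already
determine the value `g D`. For an oracle procedure, `C D` is the set of queries asked when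
running with oracle `D`. -/
def IsCertificate (g : (Y → α) → β) (C : (Y → α) → Finset Y) : Prop :=
  ∀ ⦃D D'⦄, Set.EqOn D' D (C D) → g D' = g D

/-- A conflict of the functions `g x` with certificates `C x` is the union of two certificates
for different values of the same `g x`. Whatever function `f` one has in mind, one of these two
certificates forces `g x ≠ f x`. -/
def IsConflict (g : X → (Y → α) → β) (C : X → (Y → α) → Finset Y) (S : Finset Y) : Prop :=
  ∃ x D₀ D₁, g x D₀ ≠ g x D₁ ∧ S = C x D₀ ∪ C x D₁

lemma IsCertificate.not_disjoint {g : (Y → α) → β} {C : (Y → α) → Finset Y}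
    (hC : IsCertificate g C) {D₀ D₁ : Y → α} (hne : g D₀ ≠ g D₁) : ¬Disjoint (C D₀) (C D₁) := by
  intro hdisj
  let D : Y → α := (C D₀ : Set Y).piecewise D₀ D₁
  have h₀ : g D = g D₀ := hC (Set.piecewise_eqOn _ _ _)
  have h₁ : g D = g D₁ := hC <| (Set.piecewise_eqOn_compl _ _ _).mono
    (Finset.disjoint_coe.2 hdisj).subset_compl_left
  exact hne (h₀.symm.trans h₁)

lemma IsCertificate.updateFinset {g : (Y → α) → β} {C : (Y → α) → Finset Y}
    (hC : IsCertificate g C) (U : Finset Y) (w : U → α) :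
    IsCertificate (fun D ↦ g (updateFinset D U w)) (fun D ↦ C (updateFinset D U w) \ U) := by
  intro D D' h
  refine hC fun y hy ↦ ?_
  by_cases hyU : y ∈ U
  · simp only [Function.updateFinset, hyU, dif_pos]
  · simpa only [Function.updateFinset, hyU, dif_neg, not_false_eq_true]
      using h (Finset.mem_sdiff.2 ⟨hy, hyU⟩)

variable {g : X → (Y → α) → β} {C : X → (Y → α) → Finset Y} {S : Finset Y}

lemma eq_of_forall_not_isConflict (h : ∀ S, ¬IsConflict g C S) (x : X) (D D' : Y → α) :
    g x D = g x D' :=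
  by_contra fun hne ↦ h _ ⟨x, D, D', hne, rfl⟩

lemma IsConflict.nonempty (hS : IsConflict g C S) (hC : ∀ x, IsCertificate (g x) (C x)) :
    S.Nonempty := by
  obtain ⟨x, D₀, D₁, hne, rfl⟩ := hS
  obtain ⟨y, hy, -⟩ := Finset.not_disjoint_iff.1 ((hC x).not_disjoint hne)
  exact ⟨y, Finset.mem_union_left _ hy⟩

lemma IsConflict.card_lt {q : ℕ} (hS : IsConflict g C S) (hC : ∀ x, IsCertificate (g x) (C x))
    (hq : ∀ x D, (C x D).card ≤ q) : S.card < 2 * q := by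
  obtain ⟨x, D₀, D₁, hne, rfl⟩ := hS
  have hinter : 0 < (C x D₀ ∩ C x D₁).card :=
    Finset.card_pos.2 (Finset.not_disjoint_iff_nonempty_inter.1 ((hC x).not_disjoint hne))
  have := Finset.card_union_add_card_inter (C x D₀) (C x D₁)
  have := hq x D₀
  have := hq x D₁
  omega

lemma IsConflict.exists_refutation (hS : IsConflict g C S) (f : X → β) :
    ∃ x D, C x D ⊆ S ∧ g x D ≠ f x := by
  obtain ⟨x, D₀, D₁, hne, rfl⟩ := hS
  by_cases h₀ : g x D₀ = f x
  · exact ⟨x, D₁, Finset.subset_union_right, fun h₁ ↦ hne (h₀.trans h₁.symm)⟩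
  · exact ⟨x, D₀, Finset.subset_union_left, h₀⟩

lemma IsConflict.exists_card_lt {U : Finset Y} {w : U → α}
    (hS : IsConflict (fun x D ↦ g x (updateFinset D U w))
      (fun x D ↦ C x (updateFinset D U w) \ U) S)
    (hU : ∀ S', IsConflict g C S' → ¬Disjoint S' U) :
    ∃ S', IsConflict g C S' ∧ S.card < S'.card := by
  obtain ⟨x, D₀, D₁, hne, rfl⟩ := hS
  set S' := C x (updateFinset D₀ U w) ∪ C x (updateFinset D₁ U w) with hS'
  have hconflict : IsConflict g C S' := ⟨x, _, _, hne, rfl⟩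
  refine ⟨S', hconflict, ?_⟩
  rw [← Finset.union_sdiff_distrib, ← hS', ← Finset.card_sdiff_add_card_inter S' U]
  exact Nat.lt_add_of_pos_right
    (Finset.card_pos.2 (Finset.not_disjoint_iff_nonempty_inter.1 (hU S' hconflict)))

theorem exists_pairwiseDisjoint_or_hitting {P : Finset Y → Prop} {k : ℕ}
    (hP : ∀ S, P S → S.Nonempty) (hk : ∀ S, P S → S.card ≤ k) (m : ℕ) :
    (∃ T : Finset (Finset Y), T.card = m ∧ (∀ S ∈ T, P S) ∧
      (T : Set (Finset Y)).PairwiseDisjoint id) ∨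
    ∃ U : Finset Y, U.card ≤ m * k ∧ ∀ S, P S → ¬Disjoint S U := by
  induction m with
  | zero => exact .inl ⟨∅, by simp⟩
  | succ m ih =>
    obtain ⟨T, rfl, hTP, hT⟩ | ⟨U, hU, hhit⟩ := ih
    · by_cases hdisj : ∃ S, P S ∧ Disjoint S (T.biUnion id)
      · obtain ⟨S, hPS, hS⟩ := hdisj
        have hST : ∀ S' ∈ T, Disjoint S S' := (Finset.disjoint_biUnion_right _ _ _).1 hS
        have hmem : S ∉ T := fun h ↦ (hP S hPS).ne_empty (disjoint_self.1 (hST S h))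
        refine .inl ⟨insert S T, Finset.card_insert_of_notMem hmem,
          Finset.forall_mem_insert _ _ _ |>.2 ⟨hPS, hTP⟩, ?_⟩
        rw [Finset.coe_insert]
        exact hT.insert fun S' hS' _ ↦ hST S' hS'
      · push Not at hdisj
        refine .inr ⟨T.biUnion id, ?_, hdisj⟩
        calc (T.biUnion id).card ≤ T.card * k := Finset.card_biUnion_le_card_mul _ _ _
              fun S hS ↦ hk S (hTP S hS)
          _ ≤ (T.card + 1) * k := by gcongr; omega
    · exact .inr ⟨U, hU.trans (by gcongr; omega), hhit⟩

end Certificates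

section ProductMeasure

lemma dependsOn_mem_setOf_eqOn (u : Y → α) (R : Finset Y) :
    DependsOn (· ∈ {D : Y → α | Set.EqOn D u R}) (R : Set Y) := by
  intro D D' (h : Set.EqOn D D' R)
  exact propext ⟨h.symm.trans, h.trans⟩

lemma pow_card_le_measureReal_pi_eqOn [Fintype Y] [MeasurableSpace α] {ν : Y → Measure α}
    [∀ y, IsProbabilityMeasure (ν y)] {δ : ℝ} (hδ : 0 ≤ δ)
    (hν : ∀ y a, δ ≤ (ν y).real {a}) (u : Y → α) (R : Finset Y) :
    δ ^ R.card ≤ (Measure.pi ν).real {D | Set.EqOn D u R} := by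
  have hpi : {D | Set.EqOn D u R} = (R : Set Y).pi fun y ↦ {u y} := rfl
  rw [hpi, Measure.real, Measure.pi_pi_finset, ENNReal.toReal_prod, ← Finset.prod_const]
  exact Finset.prod_le_prod (fun _ _ ↦ hδ) fun y _ ↦ hν y (u y)

variable [Fintype Y] [Finite α] [MeasurableSpace α] [DiscreteMeasurableSpace α]
  {ν : Y → Measure α} [∀ y, IsProbabilityMeasure (ν y)]

lemma measureReal_pi_inter_of_dependsOn {E F : Set (Y → α)} {U : Finset Y}
    (hE : DependsOn (· ∈ E) (U : Set Y)) (hF : DependsOn (· ∈ F) (U : Set Y)ᶜ) :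
    (Measure.pi ν).real (E ∩ F) = (Measure.pi ν).real E * (Measure.pi ν).real F := by
  rw [← Finset.coe_compl] at hF
  obtain ⟨e, he⟩ := dependsOn_iff_exists_comp.1 hE
  obtain ⟨f, hf⟩ := dependsOn_iff_exists_comp.1 hF
  have hindep : IndepFun U.restrict Uᶜ.restrict (Measure.pi ν) :=
    (iIndepFun_pi (μ := ν) (X := fun _ ↦ id) fun _ ↦ aemeasurable_id).indepFun_finset U Uᶜ
      disjoint_compl_right fun y ↦ measurable_pi_apply y
  have hE' : E = U.restrict ⁻¹' {w | e w} := Set.ext fun D ↦ (congrFun he D).to_iff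
  have hF' : F = Uᶜ.restrict ⁻¹' {w | f w} := Set.ext fun D ↦ (congrFun hf D).to_iff
  rw [hE', hF', Measure.real, hindep.measure_inter_preimage_eq_mul _ _ .of_discrete .of_discrete,
    ENNReal.toReal_mul]
  rfl

theorem measureReal_pi_forall_not_eqOn_le {ι : Type*} {δ : ℝ} (hδ₀ : 0 ≤ δ) (hδ₁ : δ ≤ 1)
    (hν : ∀ y a, δ ≤ (ν y).real {a}) {q : ℕ} (u : ι → Y → α) (R : ι → Finset Y) (s : Finset ι)
    (hq : ∀ i ∈ s, (R i).card ≤ q) (hs : (s : Set ι).PairwiseDisjoint R) :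
    (Measure.pi ν).real {D | ∀ i ∈ s, ¬Set.EqOn D (u i) (R i)} ≤ (1 - δ ^ q) ^ s.card := by
  induction s using Finset.induction_on with
  | empty => simp
  | insert i s hi ih =>
    rw [Finset.coe_insert, Set.pairwiseDisjoint_insert_of_notMem (mod_cast hi)] at hs
    rw [Finset.forall_mem_insert] at hq
    let E : Set (Y → α) := {D | Set.EqOn D (u i) (R i)}
    let F : Set (Y → α) := {D | ∀ j ∈ s, ¬Set.EqOn D (u j) (R j)}
    have hE : DependsOn (· ∈ Eᶜ) (R i : Set Y) := fun _ _ h ↦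
      congrArg Not (dependsOn_mem_setOf_eqOn (u i) (R i) h)
    have hF : DependsOn (· ∈ F) (R i : Set Y)ᶜ := fun _ _ h ↦
      propext <| forall₂_congr fun j hj ↦ not_congr <| iff_of_eq <|
        dependsOn_mem_setOf_eqOn (u j) (R j) fun y hy ↦ h y (Finset.disjoint_right.1 (hs.2 j hj) hy)
    have hE_le : (Measure.pi ν).real Eᶜ ≤ 1 - δ ^ q := by
      rw [probReal_compl_eq_one_sub .of_discrete]
      have hcylinder := pow_card_le_measureReal_pi_eqOn hδ₀ hν (u i) (R i)
      have hpow := pow_le_pow_of_le_one hδ₀ hδ₁ hq.1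
      linarith
    calc (Measure.pi ν).real {D | ∀ j ∈ insert i s, ¬Set.EqOn D (u j) (R j)}
        = (Measure.pi ν).real (Eᶜ ∩ F) := by
          congr 1 with D
          exact Finset.forall_mem_insert ..
      _ = (Measure.pi ν).real Eᶜ * (Measure.pi ν).real F :=
          measureReal_pi_inter_of_dependsOn hE hF
      _ ≤ (1 - δ ^ q) * (1 - δ ^ q) ^ s.card := by
          gcongr
          · exact measureReal_nonneg.trans hE_le
          · exact ih hq.2 hs.1
      _ = (1 - δ ^ q) ^ (insert i s).card := by rw [Finset.card_insert_of_notMem hi, pow_succ']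

lemma measureReal_pi_le_of_forall_updateFinset {E : Set (Y → α)} {B : ℝ} (U : Finset Y)
    (h : ∀ w : U → α, (Measure.pi ν).real {D | updateFinset D U w ∈ E} ≤ B) :
    (Measure.pi ν).real E ≤ B := by
  have := Fintype.ofFinite α
  let A (w : U → α) : Set (Y → α) := U.restrict ⁻¹' {w}
  let E' (w : U → α) : Set (Y → α) := {D | updateFinset D U w ∈ E}
  have hA w : DependsOn (· ∈ A w) (U : Set Y) := fun D D' hD ↦ by
    have : U.restrict D = U.restrict D' := funext fun y ↦ hD y y.2
    simp only [A, Set.mem_preimage, this]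
  have hE' w : DependsOn (· ∈ E' w) (U : Set Y)ᶜ := by
    rw [Set.compl_eq_univ_sdiff]
    exact (dependsOn_univ (· ∈ E)).updateFinset w
  have hEsplit : E = ⋃ w, A w ∩ E' w := by
    ext D
    simp [A, E']
  calc (Measure.pi ν).real E
      = ∑ w, (Measure.pi ν).real (A w ∩ E' w) := by
        rw [hEsplit, measureReal_iUnion_fintype _ fun _ ↦ .of_discrete]
        exact fun w w' hne ↦ Set.disjoint_left.2 fun D hD hD' ↦ hne (hD.1.symm.trans hD'.1)
    _ = ∑ w, (Measure.pi ν).real (A w) * (Measure.pi ν).real (E' w) :=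
        Finset.sum_congr rfl fun w _ ↦ measureReal_pi_inter_of_dependsOn (hA w) (hE' w)
    _ ≤ ∑ w, (Measure.pi ν).real (A w) * B := by gcongr with w; exact h w
    _ = B := by
        rw [← Finset.sum_mul, sum_measureReal_preimage_singleton _ fun _ _ ↦ .of_discrete]
        simp

end ProductMeasure

section Reconstruction

variable [Fintype Y] [MeasurableSpace α] [DiscreteMeasurableSpace α]
  {g : X → (Y → α) → β} {C : X → (Y → α) → Finset Y} {δ : ℝ} {q : ℕ}

theorem measureReal_pi_forall_eq_le_of_pairwiseDisjoint [Finite α] {ν : Y → Measure α}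
    [∀ y, IsProbabilityMeasure (ν y)] (hC : ∀ x, IsCertificate (g x) (C x))
    (hq : ∀ x D, (C x D).card ≤ q) (hδ₀ : 0 ≤ δ) (hδ₁ : δ ≤ 1)
    (hν : ∀ y a, δ ≤ (ν y).real {a}) {T : Finset (Finset Y)}
    (hT : ∀ S ∈ T, IsConflict g C S) (hdisj : (T : Set (Finset Y)).PairwiseDisjoint id)
    (f : X → β) :
    (Measure.pi ν).real {D | ∀ x, g x D = f x} ≤ (1 - δ ^ q) ^ T.card := by
  choose x u hsub hne using fun S : T ↦ (hT S S.2).exists_refutation f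
  calc (Measure.pi ν).real {D | ∀ x, g x D = f x}
      ≤ (Measure.pi ν).real {D | ∀ S ∈ T.attach, ¬Set.EqOn D (u S) (C (x S) (u S))} :=
        measureReal_mono fun D hD S _ h ↦ hne S ((hC _ h).symm.trans (hD _))
    _ ≤ (1 - δ ^ q) ^ T.attach.card :=
        measureReal_pi_forall_not_eqOn_le hδ₀ hδ₁ hν u (fun S ↦ C (x S) (u S)) T.attach
          (fun S _ ↦ hq _ _) fun S _ S' _ hne' ↦
            (hdisj S.2 S'.2 (Subtype.coe_ne_coe.2 hne')).mono (hsub S) (hsub S')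
    _ = (1 - δ ^ q) ^ T.card := by rw [Finset.card_attach]

-- The exponent is `∑ i < k, m * i`: fixing a hitting set of at most `m * i` positions brings the
-- conflicts from size at most `i` down to size less than `i`.
theorem exists_card_le_measureReal_pi_forall_eq_le [Fintype α] [Nonempty α]
    (hC : ∀ x, IsCertificate (g x) (C x)) (hq : ∀ x D, (C x D).card ≤ q)
    (hδ₀ : 0 ≤ δ) (hδ₁ : δ ≤ 1) (m : ℕ) {k : ℕ} (hk : ∀ S, IsConflict g C S → S.card < k) :
    ∃ F : Finset (X → β), F.card ≤ Fintype.card α ^ (m * k.choose 2) ∧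
      ∀ f ∉ F, ∀ (ν : Y → Measure α) [∀ y, IsProbabilityMeasure (ν y)],
        (∀ y a, δ ≤ (ν y).real {a}) →
          (Measure.pi ν).real {D | ∀ x, g x D = f x} ≤ (1 - δ ^ q) ^ m := by
  induction k generalizing g C with
  | zero =>
    have hconst := eq_of_forall_not_isConflict fun S hS ↦ Nat.not_lt_zero _ (hk S hS)
    let D₀ : Y → α := Classical.arbitrary _
    refine ⟨{fun x ↦ g x D₀}, by simp, fun f hf ν _ _ ↦ ?_⟩
    have hempty : {D | ∀ x, g x D = f x} = ∅ := Set.eq_empty_of_forall_notMem fun D hD ↦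
      hf <| Finset.mem_singleton.2 <| funext fun x ↦ (hD x).symm.trans (hconst x D D₀)
    rw [hempty, measureReal_empty]
    exact pow_nonneg (sub_nonneg.2 (pow_le_one₀ hδ₀ hδ₁)) m
  | succ k ih =>
    obtain ⟨T, hTm, hT, hdisj⟩ | ⟨U, hUm, hU⟩ := exists_pairwiseDisjoint_or_hitting
      (fun S hS ↦ hS.nonempty hC) (fun S hS ↦ Nat.le_of_lt_succ (hk S hS)) m
    · refine ⟨∅, by simp, fun f _ ν _ hν ↦ ?_⟩
      rw [← hTm]
      exact measureReal_pi_forall_eq_le_of_pairwiseDisjoint hC hq hδ₀ hδ₁ hν hT hdisj f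
    · choose F hF_card hF using fun w : U → α ↦
        ih (fun x ↦ (hC x).updateFinset U w)
          (fun x D ↦ (Finset.card_le_card Finset.sdiff_subset).trans (hq x _))
          fun S hS ↦ by
            obtain ⟨S', hS', hlt⟩ := hS.exists_card_lt hU
            exact hlt.trans_le (Nat.le_of_lt_succ (hk S' hS'))
      refine ⟨Finset.univ.biUnion F, ?_, fun f hf ν _ hν ↦ ?_⟩
      · calc (Finset.univ.biUnion F).card
            ≤ Fintype.card (U → α) * Fintype.card α ^ (m * k.choose 2) :=
              Finset.card_biUnion_le_card_mul _ _ _ fun w _ ↦ hF_card w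
          _ = Fintype.card α ^ (U.card + m * k.choose 2) := by
              rw [Fintype.card_fun, Fintype.card_coe, pow_add]
          _ ≤ Fintype.card α ^ (m * (k + 1).choose 2) := by
              gcongr
              · exact Fintype.card_pos
              · rw [Nat.choose_succ_succ' k 1, Nat.choose_one_right, mul_add]
                gcongr
      · refine measureReal_pi_le_of_forall_updateFinset U fun w ↦ hF w f (fun hfw ↦ hf ?_) ν hν
        exact Finset.mem_biUnion.2 ⟨w, Finset.mem_univ w, hfw⟩

end Reconstruction

section OracleProc

variable {q : ℕ} {I Q : Type*}

/-- The set of queries asked by `P` when running with oracle `D` on input `w`. -/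
noncomputable def OracleProc.queries (P : OracleProc q I Q) (D : Q → Bool) (w : I) : Finset Q :=
  Finset.univ.image fun i : Fin q ↦ P.qry i w fun j ↦ P.ans D w ⟨j, j.isLt.trans i.isLt⟩

lemma OracleProc.card_queries_le (P : OracleProc q I Q) (D : Q → Bool) (w : I) :
    (P.queries D w).card ≤ q :=
  Finset.card_image_le.trans_eq (Finset.card_fin q)

lemma OracleProc.ans_congr (P : OracleProc q I Q) {D D' : Q → Bool} {w : I}
    (h : Set.EqOn D' D (P.queries D w)) (i : Fin q) : P.ans D' w i = P.ans D w i := by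
  induction i using Fin.strong_induction_on with
  | _ i ih =>
    rw [ans, ans, ← h (Finset.mem_image_of_mem _ (Finset.mem_univ i))]
    congr 2 with j
    exact ih ⟨j, j.isLt.trans i.isLt⟩ j.isLt

lemma OracleProc.isCertificate_queries (P : OracleProc q I Q) (w : I) :
    IsCertificate (fun D ↦ P.run D w) (fun D ↦ P.queries D w) :=
  fun _ _ h ↦ congrArg (P.out w) (funext (P.ans_congr h))

end OracleProc

section NoisyOracle

variable [Fintype Y]

lemma min_le_bernoulliMeasure_real_singleton (b b' : Bool) (p : unitInterval) :
    min (p : ℝ) (1 - p) ≤ (Ber(b, !b, p)).real {b'} := by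
  obtain rfl | rfl := Bool.eq_or_eq_not b' b
  · rw [bernoulliMeasure_real_apply_of_mem_of_notMem _ .of_discrete (by simp) (by simp)]
    exact min_le_left _ _
  · rw [bernoulliMeasure_real_apply_of_notMem_of_mem _ .of_discrete (by simp) (by simp)]
    exact min_le_right _ _

lemma uPr_eq_sum_div (P : Y → Prop) [DecidablePred P] :
    uPr P = (∑ y, if P y then 1 else 0) / Fintype.card Y := by
  rw [uPr, Fintype.card_subtype, Finset.natCast_card_filter]

theorem measureReal_pi_le_abs_sum_sub_integral {Ω : Type*} [MeasurableSpace Ω]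
    {ν : Y → Measure Ω} [∀ y, IsProbabilityMeasure (ν y)] {Z : Y → Ω → ℝ}
    (hZ : ∀ y, Measurable (Z y)) (hZ_mem : ∀ y ω, Z y ω ∈ Set.Icc 0 1) {t : ℝ} (ht : 0 < t) :
    (Measure.pi ν).real {D | t ≤ |∑ y, Z y (D y) - ∑ y, ∫ ω, Z y ω ∂ν y|} ≤
      Fintype.card Y / (4 * t ^ 2) := by
  have hmemLp y : MemLp (Z y) 2 (ν y) :=
    MemLp.of_bound (hZ y).aestronglyMeasurable 1 <| .of_forall fun ω ↦ by
      rw [Real.norm_of_nonneg (hZ_mem y ω).1]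
      exact (hZ_mem y ω).2
  have hmemLp_eval y : MemLp (fun D : Y → Ω ↦ Z y (D y)) 2 (Measure.pi ν) :=
    (hmemLp y).comp_measurePreserving (measurePreserving_eval ν y)
  let S : (Y → Ω) → ℝ := ∑ y, fun D ↦ Z y (D y)
  have hS D : S D = ∑ y, Z y (D y) := Finset.sum_apply _ _ _
  have hmean : (Measure.pi ν)[S] = ∑ y, ∫ ω, Z y ω ∂ν y := by
    simp_rw [hS]
    rw [integral_finsetSum _ fun y _ ↦ (hmemLp_eval y).integrable one_le_two]
    exact Finset.sum_congr rfl fun y _ ↦ integral_comp_eval (hZ y).aestronglyMeasurable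
  have hvar : Var[S; Measure.pi ν] ≤ Fintype.card Y / 4 := by
    calc Var[S; Measure.pi ν] = ∑ y, Var[Z y; ν y] := variance_sum_pi hmemLp
      _ ≤ ∑ _y : Y, ((1 - 0) / 2) ^ 2 := Finset.sum_le_sum fun y _ ↦
          variance_le_sq_of_bounded (.of_forall (hZ_mem y)) (hZ y).aemeasurable
      _ = Fintype.card Y / 4 := by
          rw [Finset.sum_const, Finset.card_univ, nsmul_eq_mul]
          ring
  have hchebyshev := meas_ge_le_variance_div_sq (μ := Measure.pi ν)
    (memLp_finsetSum' Finset.univ fun y _ ↦ hmemLp_eval y) ht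
  simp_rw [← hS, ← hmean]
  calc (Measure.pi ν).real {D | t ≤ |S D - (Measure.pi ν)[S]|}
      ≤ Var[S; Measure.pi ν] / t ^ 2 :=
        ENNReal.toReal_le_of_le_ofReal (div_nonneg (variance_nonneg _ _) (sq_nonneg t)) hchebyshev
    _ ≤ Fintype.card Y / 4 / t ^ 2 := by gcongr
    _ = Fintype.card Y / (4 * t ^ 2) := div_div _ _ _

theorem measureReal_pi_bernoulliMeasure_uPr_le [Nonempty Y] (c : Y → Bool) {p : unitInterval}
    {r : ℝ} (hr : r < p) :
    (Measure.pi fun y ↦ Ber(c y, !c y, p)).real {D | uPr (fun y ↦ D y = c y) ≤ r} ≤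
      1 / (4 * Fintype.card Y * (p - r) ^ 2) := by
  have hN : (0 : ℝ) < Fintype.card Y := Nat.cast_pos.2 Fintype.card_pos
  have hgap : 0 < (p : ℝ) - r := sub_pos.2 hr
  let Z (y : Y) (b : Bool) : ℝ := if b = c y then 1 else 0
  have hZ_mem y b : Z y b ∈ Set.Icc 0 1 := by
    dsimp only [Z]
    split_ifs <;> simp
  have hZ_mean y : ∫ b, Z y b ∂Ber(c y, !c y, p) = p := by
    simp [integral_bernoulliMeasure, Z]
  have hdev (D : Y → Bool) (hD : uPr (fun y ↦ D y = c y) ≤ r) :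
      Fintype.card Y * (p - r : ℝ) ≤
        |∑ y, Z y (D y) - ∑ y, ∫ b, Z y b ∂Ber(c y, !c y, p)| := by
    rw [uPr_eq_sum_div, div_le_iff₀ hN] at hD
    simp_rw [hZ_mean, Finset.sum_const, Finset.card_univ, nsmul_eq_mul]
    rw [abs_sub_comm]
    exact le_trans (by linarith) (le_abs_self _)
  calc _ ≤ _ := measureReal_mono hdev
    _ ≤ Fintype.card Y / (4 * (Fintype.card Y * (p - r)) ^ 2) :=
        measureReal_pi_le_abs_sum_sub_integral (fun _ ↦ .of_discrete) hZ_mem (mul_pos hN hgap)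
    _ = 1 / (4 * Fintype.card Y * (p - r) ^ 2) := by field_simp

end NoisyOracle

section Arithmetic

lemma three_pow_mul_choose_two_lt_eight_pow (q : ℕ) : 3 ^ q * (2 * q).choose 2 < 8 ^ q := by
  obtain hq | hq := lt_or_ge q 2
  · interval_cases q <;> decide
  induction q, hq using Nat.le_induction with
  | base => decide
  | succ q hq ih =>
    have hchoose : (2 * q).choose 2 = q * (2 * q - 1) := by
      rw [Nat.choose_two_right, mul_assoc, Nat.mul_div_cancel_left _ two_pos]
    have hchoose_succ : (2 * (q + 1)).choose 2 = (2 * q).choose 2 + (4 * q + 1) := by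
      rw [mul_add, Nat.choose_succ_succ', Nat.choose_succ_succ' _ 1, Nat.choose_one_right,
        Nat.choose_one_right]
      ring
    have hratio : 3 * (2 * (q + 1)).choose 2 ≤ 8 * (2 * q).choose 2 := by
      rw [hchoose_succ, hchoose]
      obtain ⟨r, rfl⟩ := Nat.exists_eq_add_of_le hq
      rw [show 2 * (2 + r) - 1 = 2 * r + 3 by omega]
      nlinarith
    calc 3 ^ (q + 1) * (2 * (q + 1)).choose 2
        = 3 ^ q * (3 * (2 * (q + 1)).choose 2) := by ring
      _ ≤ 3 ^ q * (8 * (2 * q).choose 2) := by gcongr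
      _ = 8 * (3 ^ q * (2 * q).choose 2) := by ring
      _ < 8 * 8 ^ q := by gcongr
      _ = 8 ^ (q + 1) := (pow_succ' 8 q).symm

lemma two_pow_mul_one_sub_pow_lt_half (a q : ℕ) :
    (2 : ℝ) ^ a * (1 - (1 / 3) ^ q) ^ ((a + 1) * 3 ^ q) < 1 / 2 := by
  have hbase : (1 - (1 / 3 : ℝ) ^ q) ^ 3 ^ q ≤ Real.exp (-1) := by
    have h := Real.one_sub_div_pow_le_exp_neg (n := 3 ^ q) (t := 1)
      (mod_cast Nat.one_le_pow _ _ three_pos)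
    simpa only [Nat.cast_pow, Nat.cast_ofNat, one_div_pow] using h
  have hnonneg : 0 ≤ 1 - (1 / 3 : ℝ) ^ q :=
    sub_nonneg.2 (pow_le_one₀ (by norm_num) (by norm_num))
  calc (2 : ℝ) ^ a * (1 - (1 / 3) ^ q) ^ ((a + 1) * 3 ^ q)
      = 2 ^ a * ((1 - (1 / 3) ^ q) ^ 3 ^ q) ^ (a + 1) := by rw [← pow_mul, mul_comm (a + 1)]
    _ ≤ 2 ^ a * Real.exp (-1) ^ (a + 1) := by gcongr
    _ < 2 ^ a * (1 / 2) ^ (a + 1) := by gcongr; exact Real.exp_neg_one_lt_half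
    _ = 1 / 2 := by rw [pow_succ, ← mul_assoc, ← mul_pow]; norm_num

lemma two_hundred_le_two_pow {n : ℕ} {ε : ℝ} (hε₀ : 0 < ε) (hε : ε ≤ 1 / 10)
    (hn : Real.logb 2 (1 / ε ^ 2) + 1 ≤ n) : 200 ≤ 2 ^ n := by
  have hε_inv : 100 ≤ 1 / ε ^ 2 := by
    rw [le_div_iff₀ (by positivity)]
    nlinarith
  have hn' : 1 / ε ^ 2 ≤ 2 ^ ((n : ℝ) - 1) :=
    (Real.logb_le_iff_le_rpow one_lt_two (by positivity)).1 (by linarith)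
  rw [Real.rpow_sub two_pos, Real.rpow_natCast, Real.rpow_one] at hn'
  have : (200 : ℝ) ≤ 2 ^ n := by linarith
  exact_mod_cast this

lemma sub_logb_div_three_le {ℓ a q : ℕ} (h : 2 ^ ℓ ≤ (a + 1) * 8 ^ q) :
    ((ℓ : ℝ) - Real.logb 2 (2 * a)) / 3 ≤ q := by
  -- For `a = 0` both sides vanish, since `Real.logb 2 0 = 0`.
  have ha : Real.logb 2 (a + 1) ≤ Real.logb 2 (2 * a) := by
    obtain rfl | ha := Nat.eq_zero_or_pos a
    · simp
    · have : (1 : ℝ) ≤ a := mod_cast ha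
      exact Real.logb_le_logb_of_le one_lt_two (by positivity) (by linarith)
  have hℓ : (ℓ : ℝ) ≤ Real.logb 2 (a + 1) + 3 * q := by
    calc (ℓ : ℝ) = Real.logb 2 (2 ^ ℓ) := by
          rw [Real.logb_pow, Real.logb_self_eq_one one_lt_two, mul_one]
      _ ≤ Real.logb 2 ((a + 1) * 8 ^ q) :=
          Real.logb_le_logb_of_le one_lt_two (by positivity) (mod_cast h)
      _ = Real.logb 2 (a + 1) + 3 * q := by
          rw [Real.logb_mul (by positivity) (by positivity), show (8 : ℝ) = 2 ^ 3 by norm_num,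
            ← pow_mul, Real.logb_pow, Real.logb_self_eq_one one_lt_two, mul_one]
          push_cast
          rfl
  linarith

end Arithmetic

section HardnessAmplification

variable {A : Type*} [Fintype X] [Fintype Y] [Fintype A]

theorem OracleProc.exists_measureReal_pi_run_eq_le {q a : ℕ} (Red : OracleProc q (X × A) Y)
    (hA : Fintype.card A ≤ 2 ^ a) (hX : (a + 1) * 8 ^ q ≤ Fintype.card X) :
    ∃ f : X → Bool, ∀ (α : A) (ν : Y → Measure Bool) [∀ y, IsProbabilityMeasure (ν y)],
      (∀ y b, 1 / 3 ≤ (ν y).real {b}) →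
        (Measure.pi ν).real {D | ∀ x, Red.run D (x, α) = f x} ≤
          (1 - (1 / 3) ^ q) ^ ((a + 1) * 3 ^ q) := by
  set m := (a + 1) * 3 ^ q with hm
  choose F hF_card hF using fun α : A ↦ exists_card_le_measureReal_pi_forall_eq_le (δ := 1 / 3)
    (fun x : X ↦ Red.isCertificate_queries (x, α))
    (fun x D ↦ Red.card_queries_le D (x, α)) (by norm_num) (by norm_num) m
    fun S hS ↦ hS.card_lt (fun x ↦ Red.isCertificate_queries (x, α))
      fun x D ↦ Red.card_queries_le D (x, α)
  have hexp : a + m * (2 * q).choose 2 < (a + 1) * 8 ^ q := by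
    have h := three_pow_mul_choose_two_lt_eight_pow q
    rw [hm, mul_assoc]
    nlinarith
  have hcard : (Finset.univ.biUnion F).card < (Finset.univ : Finset (X → Bool)).card := by
    calc (Finset.univ.biUnion F).card
        ≤ Fintype.card A * 2 ^ (m * (2 * q).choose 2) :=
          Finset.card_biUnion_le_card_mul _ _ _ fun α _ ↦ hF_card α
      _ ≤ 2 ^ a * 2 ^ (m * (2 * q).choose 2) := by gcongr
      _ = 2 ^ (a + m * (2 * q).choose 2) := (pow_add ..).symm
      _ < 2 ^ Fintype.card X := by gcongr; exacts [one_lt_two, hexp.trans_le hX]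
      _ = (Finset.univ : Finset (X → Bool)).card := by simp
  obtain ⟨f, -, hf⟩ := Finset.exists_mem_notMem_of_card_lt_card hcard
  exact ⟨f, fun α ν _ hν ↦ hF α f (fun hfα ↦ hf (Finset.mem_biUnion.2 ⟨α, Finset.mem_univ α, hfα⟩))
    ν hν⟩

theorem OracleProc.exists_measureReal_pi_exists_run_eq_lt_half {q a : ℕ}
    (Red : OracleProc q (X × A) Y) (hA : Fintype.card A ≤ 2 ^ a)
    (hX : (a + 1) * 8 ^ q ≤ Fintype.card X) :
    ∃ f : X → Bool, ∀ (ν : Y → Measure Bool) [∀ y, IsProbabilityMeasure (ν y)],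
      (∀ y b, 1 / 3 ≤ (ν y).real {b}) →
        (Measure.pi ν).real {D | ∃ α, ∀ x, Red.run D (x, α) = f x} < 1 / 2 := by
  obtain ⟨f, hf⟩ := Red.exists_measureReal_pi_run_eq_le hA hX
  refine ⟨f, fun ν _ hν ↦ ?_⟩
  have hnonneg : 0 ≤ 1 - (1 / 3 : ℝ) ^ q :=
    sub_nonneg.2 (pow_le_one₀ (by norm_num) (by norm_num))
  rw [Set.ofPred_exists]
  calc (Measure.pi ν).real (⋃ α, {D | ∀ x, Red.run D (x, α) = f x})
      ≤ ∑ α, (Measure.pi ν).real {D | ∀ x, Red.run D (x, α) = f x} :=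
        measureReal_iUnion_fintype_le _
    _ ≤ ∑ _α : A, (1 - (1 / 3) ^ q) ^ ((a + 1) * 3 ^ q) :=
        Finset.sum_le_sum fun α _ ↦ hf α ν hν
    _ = Fintype.card A * (1 - (1 / 3) ^ q) ^ ((a + 1) * 3 ^ q) := by
        rw [Finset.sum_const, Finset.card_univ, nsmul_eq_mul]
    _ ≤ 2 ^ a * (1 - (1 / 3) ^ q) ^ ((a + 1) * 3 ^ q) := by
        gcongr
        exact_mod_cast hA
    _ < 1 / 2 := two_pow_mul_one_sub_pow_lt_half a q

theorem hardness_amplification_query_lower_bound_ell_general {q a : ℕ} {ρ : ℝ}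
    (hρ : ρ ≤ 3 / 5) (hY : 200 ≤ Fintype.card Y) (hA : Fintype.card A ≤ 2 ^ a)
    (Con : (X → Bool) → Y → Bool) (Red : OracleProc q (X × A) Y)
    (hRed : ∀ f D, ρ ≤ uPr (fun y ↦ D y = Con f y) → ∃ α, ∀ x, Red.run D (x, α) = f x) :
    Fintype.card X < (a + 1) * 8 ^ q := by
  by_contra! hX
  have : Nonempty Y := Fintype.card_pos_iff.1 (by omega)
  have hN : (200 : ℝ) ≤ Fintype.card Y := mod_cast hY
  obtain ⟨f, hf⟩ := Red.exists_measureReal_pi_exists_run_eq_lt_half hA hX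
  let p : unitInterval := ⟨2 / 3, by norm_num, by norm_num⟩
  let μ := Measure.pi fun y ↦ Ber(Con f y, !Con f y, p)
  let far : Set (Y → Bool) := {D | uPr (fun y ↦ D y = Con f y) ≤ 3 / 5}
  let computed : Set (Y → Bool) := {D | ∃ α, ∀ x, Red.run D (x, α) = f x}
  have hfar : μ.real far ≤ 1 / 2 := by
    calc μ.real far ≤ 1 / (4 * Fintype.card Y * ((p : ℝ) - 3 / 5) ^ 2) :=
          measureReal_pi_bernoulliMeasure_uPr_le (Con f) (by norm_num [p])
      _ ≤ 1 / (4 * 200 * ((p : ℝ) - 3 / 5) ^ 2) := by gcongr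
      _ ≤ 1 / 2 := by norm_num [p]
  have hcomputed : μ.real computed < 1 / 2 :=
    hf _ fun y b ↦ le_trans (by norm_num [p]) (min_le_bernoulliMeasure_real_singleton _ b p)
  have hcover : Set.univ ⊆ far ∪ computed := fun D _ ↦
    (le_or_gt (uPr fun y ↦ D y = Con f y) (3 / 5)).imp_right fun hD ↦ hRed f D (hρ.trans hD.le)
  have huniv : 1 ≤ μ.real far + μ.real computed := by
    calc 1 = μ.real Set.univ := probReal_univ.symm
      _ ≤ μ.real (far ∪ computed) := measureReal_mono hcover
      _ ≤ μ.real far + μ.real computed := measureReal_union_le _ _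
  linarith

end HardnessAmplification

/-- Theorem 4.2: lower bound of `(ℓ - log(2a))/3` on the number of queries in black-box
hardness amplification. -/
theorem hardness_amplification_query_lower_bound_ell :
    ∃ c₃ : ℝ, c₃ > 0 ∧
      ∀ (ℓ ℓ' a q : ℕ) (ε : ℝ)
        (Con : ((Fin ℓ → Bool) → Bool) → (Fin ℓ' → Bool) → Bool)
        (Red : OracleProc q ((Fin ℓ → Bool) × (Fin a → Bool)) (Fin ℓ' → Bool)),
        -- (Con, Red) is a black-box HF ⇒ (1/2+ε)-HF proof:
        (∀ (f : (Fin ℓ → Bool) → Bool) (D : (Fin ℓ' → Bool) → Bool),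
            uPr (fun x : Fin ℓ' → Bool => D x = Con f x) ≥ 1 / 2 + ε →
            ∃ α : Fin a → Bool, ∀ x : Fin ℓ → Bool, OracleProc.run Red D (x, α) = f x) →
        0 < ε → ε ≤ 1 / 10 →
        (ℓ' : ℝ) ≥ Real.logb 2 (1 / ε ^ 2) + c₃ →
        (q : ℝ) ≥ ((ℓ : ℝ) - Real.logb 2 (2 * a)) / 3 := by
  refine ⟨1, one_pos, fun ℓ ℓ' a q ε Con Red hRed hε₀ hε hℓ' ↦ sub_logb_div_three_le ?_⟩
  have hY := two_hundred_le_two_pow hε₀ hε hℓ'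
  have hX := hardness_amplification_query_lower_bound_ell_general (a := a) (by linarith)
    (by simpa using hY) (by simp) Con Red hRed
  simpa using hX.le
end

section
/- Let (Con, Red) be a black-box HF⇒(1/2+ε)-HF proof with parameters (ℓ, ℓ', a) whose reduction makes q queries, and let n = 2^{ℓ'}. Then for every α ∈ {0,1}^a there exists a q-CNF C^α over n variables with at most 2^{q+ℓ} clauses such that the function C = ⋁_{α ∈ {0,1}^a} C^α satisfies: (1) Pr[C(U_n) = 1] ≤ 2^{−(2^ℓ − a)}; and (2) C(x) = 1 for every x ∈ {0,1}^n with wt(x) ≤ (1/2 − ε)·n. -/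
open scoped BigOperators

attribute [local instance] Classical.propDecidable

/-!
Read a string `z ∈ {0,1}ⁿ` as a corruption pattern: it turns the hard function `Con f` into the
oracle `Con f ⊕ z`, which agrees with `Con f` off the ones of `z`. If `z` is light, the reduction
therefore recovers `f` from `Con f ⊕ z` under some advice. For fixed `f` and advice, the success
of the reduction is a `q`-CNF in `z`: it forbids, for every input, each transcript of `q` answers
that leads to a wrong output, and a transcript is ruled out by a single wrong answer among its `q`.

It remains to choose `f` so that few `z` are accepted. For uniform `z` the oracle `Con f ⊕ z` is a
uniform oracle regardless of `f`, and a fixed oracle decodes to at most `2 ^ a` functions as the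
advice varies; so, on average over the `2 ^ (2 ^ ℓ)` functions `f`, a uniform `z` is accepted with
probability at most `2 ^ a / 2 ^ (2 ^ ℓ)`.
-/

section UniformProbability

variable {X Y : Type*} [Fintype X] [Fintype Y]

theorem uPr_eq_card_filter_div (P : X → Prop) [DecidablePred P] :
    uPr P = ((Finset.univ.filter P).card : ℝ) / Fintype.card X := by
  rw [uPr, Fintype.card_subtype]

theorem uPr_comp_equiv (σ : X ≃ Y) (P : Y → Prop) : uPr (fun x => P (σ x)) = uPr P := by
  rw [uPr, uPr, Fintype.card_congr σ,
    Fintype.card_congr (σ.subtypeEquiv (p := fun x => P (σ x)) (q := P) fun _ => Iff.rfl)]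

theorem uPr_not [Nonempty X] (P : X → Prop) : uPr (fun x => ¬ P x) = 1 - uPr P := by
  have hX : (Fintype.card X : ℝ) ≠ 0 := Nat.cast_ne_zero.mpr Fintype.card_ne_zero
  rw [uPr_eq_card_filter_div, uPr_eq_card_filter_div, eq_sub_iff_add_eq', ← add_div,
    div_eq_one_iff_eq hX]
  exact_mod_cast Finset.card_filter_add_card_filter_not (s := Finset.univ) P

theorem sum_uPr_le_of_card_filter_le {r : X → Y → Prop} [∀ x y, Decidable (r x y)] {k : ℕ}
    (hr : ∀ y, (Finset.univ.filter fun x => r x y).card ≤ k) : ∑ x, uPr (r x) ≤ k := by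
  have hcount : ∑ x, (Finset.univ.filter (r x)).card ≤ k * Fintype.card Y :=
    calc ∑ x, (Finset.univ.filter (r x)).card
        = ∑ y, (Finset.univ.filter fun x => r x y).card :=
          Finset.sum_card_bipartiteAbove_eq_sum_card_bipartiteBelow r
      _ ≤ ∑ _y : Y, k := Finset.sum_le_sum fun y _ => hr y
      _ = k * Fintype.card Y := by simp [mul_comm]
  simp only [uPr_eq_card_filter_div, ← Finset.sum_div]
  exact div_le_of_le_mul₀ (Nat.cast_nonneg _) (Nat.cast_nonneg _) (by exact_mod_cast hcount)

theorem exists_uPr_decode_eq_le {F A : Type*} [Fintype F] [Nonempty F] [Fintype A]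
    (decode : X → A → F) :
    ∃ f, uPr (fun x => ∃ α, decode x α = f) ≤ (Fintype.card A : ℝ) / Fintype.card F := by
  have hlist (x : X) : (Finset.univ.filter fun f => ∃ α, decode x α = f).card ≤ Fintype.card A :=
    calc (Finset.univ.filter fun f => ∃ α, decode x α = f).card
        = (Finset.univ.image (decode x)).card := by congr 1; ext f; simp
      _ ≤ Fintype.card A := Finset.card_image_le
  have hsum : ∑ f, uPr (fun x => ∃ α, decode x α = f) ≤
      ∑ _f : F, (Fintype.card A : ℝ) / Fintype.card F :=
    calc ∑ f, uPr (fun x => ∃ α, decode x α = f)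
        ≤ Fintype.card A := sum_uPr_le_of_card_filter_le hlist
      _ = ∑ _f : F, (Fintype.card A : ℝ) / Fintype.card F := by
          rw [Finset.sum_const, Finset.card_univ, nsmul_eq_mul, mul_div_cancel₀]
          exact Nat.cast_ne_zero.mpr Fintype.card_ne_zero
  obtain ⟨f, -, hf⟩ := Finset.exists_le_of_sum_le Finset.univ_nonempty hsum
  exact ⟨f, hf⟩

end UniformProbability

section Corruption

variable {n : ℕ} {Q : Type*}

/-- The oracle `g ⊕ z`: the table `g` with its answers flipped at the ones of the string `z`, whose
positions label the queries through `e`. As a function of `z` it is a bijection onto all oracles. -/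
@[simps apply]
def corruption (e : Q ≃ Fin n) (g : Q → Bool) : (Fin n → Bool) ≃ (Q → Bool) where
  toFun z y := g y ^^ z (e y)
  invFun D i := g (e.symm i) ^^ D (e.symm i)
  left_inv z := by simp
  right_inv D := by simp

theorem uPr_corruption_eq [Fintype Q] [Nonempty Q] (e : Q ≃ Fin n) (g : Q → Bool)
    (z : Fin n → Bool) : uPr (fun y => corruption e g z y = g y) = 1 - (wt z : ℝ) / n :=
  calc uPr (fun y => corruption e g z y = g y)
      = uPr (fun y => ¬ z (e y) = true) := by
        congr! 2 with y
        rw [corruption_apply, Bool.not_eq_true]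
        cases g y <;> simp
    _ = 1 - uPr (fun y => z (e y) = true) := uPr_not _
    _ = 1 - uPr (fun i => z i = true) := by rw [uPr_comp_equiv e fun i => z i = true]
    _ = 1 - (wt z : ℝ) / n := by rw [uPr_eq_card_filter_div, Fintype.card_fin, wt]

end Corruption

namespace OracleProc

variable {q n : ℕ} {I J Q : Type*}

/-- The procedure that preprocesses its input by `φ`; for instance, fixing the advice of a
reduction amounts to `φ = (·, α)`. -/
def comap (P : OracleProc q I Q) (φ : J → I) : OracleProc q J Q where
  qry i w := P.qry i (φ w)
  out w := P.out (φ w)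

/-- The `i`-th query on input `w` in the (possibly counterfactual) run whose answers are `b`. -/
def qryAlong (P : OracleProc q I Q) (w : I) (b : Fin q → Bool) (i : Fin q) : Q :=
  P.qry i w fun j => b ⟨j, j.isLt.trans i.isLt⟩

theorem ans_eq_iff (P : OracleProc q I Q) (D : Q → Bool) (w : I) (b : Fin q → Bool) :
    P.ans D w = b ↔ ∀ i, D (P.qryAlong w b i) = b i := by
  constructor
  · rintro rfl i
    conv_rhs => rw [ans]
    rfl
  · intro h
    funext i
    induction i using WellFoundedLT.induction with
    | _ i ih =>
      rw [ans, ← h i, qryAlong]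
      congr 2
      funext j
      exact ih ⟨j, j.isLt.trans i.isLt⟩ j.isLt

theorem run_comap (P : OracleProc q I Q) (φ : J → I) (D : Q → Bool) (w : J) :
    (P.comap φ).run D w = P.run D (φ w) := by
  have hans : (P.comap φ).ans D w = P.ans D (φ w) :=
    ((P.comap φ).ans_eq_iff D w _).mpr ((P.ans_eq_iff D (φ w) _).mp rfl)
  rw [run, run, hans, comap]

/-- The clause in the variables `z` ruling out that, on input `w`, the oracle `g ⊕ z` gives the
answers `b`. -/
def transcriptClause (P : OracleProc q I Q) (e : Q ≃ Fin n) (g : Q → Bool) (w : I)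
    (b : Fin q → Bool) : BClause n :=
  List.ofFn fun i => (e (P.qryAlong w b i), !(g (P.qryAlong w b i) ^^ b i))

theorem eval_transcriptClause_iff (P : OracleProc q I Q) (e : Q ≃ Fin n) (g : Q → Bool) (w : I)
    (b : Fin q → Bool) (z : Fin n → Bool) :
    (P.transcriptClause e g w b).eval z = true ↔ P.ans (corruption e g z) w ≠ b := by
  have hliteral (u v t : Bool) : (u == !(v ^^ t)) = true ↔ (v ^^ u) ≠ t := by
    revert u v t; decide
  rw [Ne, ans_eq_iff, not_forall]
  simp only [BClause.eval, transcriptClause, List.any_eq_true, List.mem_ofFn, exists_exists_eq_and,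
    hliteral, corruption_apply]

/-- The CNF in the variables `z` asserting that the procedure with oracle `g ⊕ z` computes `f`: it
rules out all transcripts on which the output is wrong. -/
noncomputable def computesCNF [Fintype I] (P : OracleProc q I Q) (e : Q ≃ Fin n) (g : Q → Bool)
    (f : I → Bool) : BCNF n :=
  (Finset.univ.filter fun p : (Fin q → Bool) × I => P.out p.2 p.1 ≠ f p.2).toList.map
    fun p => P.transcriptClause e g p.2 p.1

variable [Fintype I]

theorem eval_computesCNF_iff (P : OracleProc q I Q) (e : Q ≃ Fin n) (g : Q → Bool) (f : I → Bool)
    (z : Fin n → Bool) :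
    (P.computesCNF e g f).eval z = true ↔ P.run (corruption e g z) = f := by
  have heval : (P.computesCNF e g f).eval z = true ↔
      ∀ b w, P.out w b ≠ f w → P.ans (corruption e g z) w ≠ b := by
    simp [BCNF.eval, computesCNF, eval_transcriptClause_iff]
  rw [heval, funext_iff]
  refine ⟨fun h w => ?_, fun h b w hb hans => hb ?_⟩
  · by_contra hw
    exact h _ w hw rfl
  · rw [← h w, run, hans]

theorem width_computesCNF (P : OracleProc q I Q) (e : Q ≃ Fin n) (g : Q → Bool) (f : I → Bool) :
    (P.computesCNF e g f).width q := by
  intro c hc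
  obtain ⟨p, -, rfl⟩ := List.mem_map.mp hc
  exact List.length_ofFn.le

theorem length_computesCNF_le (P : OracleProc q I Q) (e : Q ≃ Fin n) (g : Q → Bool)
    (f : I → Bool) : (P.computesCNF e g f).length ≤ 2 ^ q * Fintype.card I := by
  rw [computesCNF, List.length_map, Finset.length_toList]
  exact (Finset.card_le_univ _).trans_eq (by simp)

end OracleProc

theorem two_rpow_neg_two_pow_sub (ℓ a : ℕ) :
    (2 : ℝ) ^ (-((2 : ℝ) ^ ℓ - (a : ℝ))) = 2 ^ a / 2 ^ 2 ^ ℓ := by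
  rw [neg_sub, Real.rpow_sub two_pos, Real.rpow_natCast]
  norm_cast

theorem reduction_to_depth3_circuit_general {X A Q : Type*} [Fintype X] [Fintype A] [Fintype Q]
    [Nonempty Q] {q n : ℕ} (hn : Fintype.card Q = n) {ρ : ℝ} (Con : (X → Bool) → Q → Bool)
    (Red : OracleProc q (X × A) Q)
    (hRed : ∀ (f : X → Bool) (D : Q → Bool), ρ ≤ uPr (fun y => D y = Con f y) →
      ∃ α, ∀ x, Red.run D (x, α) = f x) :
    ∃ C : A → BCNF n,
      (∀ α, (C α).width q ∧ (C α).length ≤ 2 ^ q * Fintype.card X) ∧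
      uPr (fun z : Fin n → Bool => ∃ α, (C α).eval z = true) ≤
        (Fintype.card A : ℝ) / 2 ^ Fintype.card X ∧
      ∀ z : Fin n → Bool, (wt z : ℝ) ≤ (1 - ρ) * n → ∃ α, (C α).eval z = true := by
  let e : Q ≃ Fin n := Fintype.equivFinOfCardEq hn
  let decode (D : Q → Bool) (α : A) (x : X) : Bool := Red.run D (x, α)
  obtain ⟨f, hf⟩ := exists_uPr_decode_eq_le decode
  let C (α : A) : BCNF n := (Red.comap (·, α)).computesCNF e (Con f) f
  have hC (z : Fin n → Bool) (α : A) :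
      (C α).eval z = true ↔ decode (corruption e (Con f) z) α = f := by
    rw [OracleProc.eval_computesCNF_iff, funext_iff, funext_iff]
    simp only [OracleProc.run_comap, decode]
  have hprob : uPr (fun z => ∃ α, (C α).eval z = true) ≤
      (Fintype.card A : ℝ) / 2 ^ Fintype.card X := by
    simp only [hC]
    rw [uPr_comp_equiv (corruption e (Con f)) fun D => ∃ α, decode D α = f]
    simpa using hf
  refine ⟨C, fun α => ⟨OracleProc.width_computesCNF _ _ _ _,
    OracleProc.length_computesCNF_le _ _ _ _⟩, hprob, fun z hz => ?_⟩
  have hn_pos : (0 : ℝ) < n := by exact_mod_cast hn ▸ Fintype.card_pos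
  have hagree : ρ ≤ uPr (fun y => corruption e (Con f) z y = Con f y) := by
    rw [uPr_corruption_eq, le_sub_comm, div_le_iff₀ hn_pos]
    exact hz
  obtain ⟨α, hα⟩ := hRed f _ hagree
  exact ⟨α, (hC z α).mpr (funext hα)⟩

/-- Lemma 4.3: a black-box HF ⇒ (1/2+ε)-HF proof yields a depth-3 circuit (an OR of
`2^a` many `q`-CNFs, each with at most `2^{q+ℓ}` clauses) that accepts all strings of low
Hamming weight but almost no uniform strings. -/
theorem reduction_to_depth3_circuit (ℓ ℓ' a q n : ℕ) (ε : ℝ)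
    (hn : n = 2 ^ ℓ')
    (Con : ((Fin ℓ → Bool) → Bool) → (Fin ℓ' → Bool) → Bool)
    (Red : OracleProc q ((Fin ℓ → Bool) × (Fin a → Bool)) (Fin ℓ' → Bool))
    -- (Con, Red) is a black-box HF ⇒ (1/2+ε)-HF proof:
    (hRed : ∀ (f : (Fin ℓ → Bool) → Bool) (D : (Fin ℓ' → Bool) → Bool),
      uPr (fun x : Fin ℓ' → Bool => D x = Con f x) ≥ 1 / 2 + ε →
      ∃ α : Fin a → Bool, ∀ x : Fin ℓ → Bool, OracleProc.run Red D (x, α) = f x) :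
    ∃ C : (Fin a → Bool) → BCNF n,
      (∀ α, BCNF.width (C α) q ∧ (C α).length ≤ 2 ^ (q + ℓ)) ∧
      uPr (fun x : Fin n → Bool => ∃ α, BCNF.eval (C α) x = true) ≤
          (2 : ℝ) ^ (-((2 : ℝ) ^ (ℓ : ℕ) - (a : ℝ))) ∧
      ∀ x : Fin n → Bool, (wt x : ℝ) ≤ (1 / 2 - ε) * (n : ℝ) →
        ∃ α, BCNF.eval (C α) x = true := by
  obtain ⟨C, hsize, hprob, hlight⟩ :=
    reduction_to_depth3_circuit_general (n := n) (by simp [hn]) Con Red hRed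
  refine ⟨C, by simpa [pow_add] using hsize, ?_, fun x hx => hlight x (by linarith)⟩
  rw [two_rpow_neg_two_pow_sub]
  simpa using hprob
end

section
/- There exists a constant n₀ such that the following holds for all n ≥ n₀. Let 0 < ε ≤ 1/10 and let C = ⋁_{α ∈ {0,1}^a} C^α be a Boolean function on n variables, where each C^α is a q-CNF over n variables. Assume Pr[C(U_n) = 1] ≤ 2^{−(2^ℓ − a)} and C(x) = 1 for every x ∈ {0,1}^n with wt(x) ≤ (1/2 − ε)·n. Then there exists α ∈ {0,1}^a such that Pr[C^α(U_n) = 1] ≤ 2^{−(2^ℓ − a)} and Pr[C^α(U^{1/3}_n) = 1] ≥ 2^{−(a+1)}. -/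
open scoped BigOperators

attribute [local instance] Classical.propDecidable

/-! The `p`-biased weight is concentrated around `pn` by Chernoff's bound, so for every `τ > p` a
`p`-biased string has weight at most `τn`, and is thus accepted by the OR, with probability tending
to `1`. By the union bound one of the disjuncts accepts with at least the average probability; it
is as rare as the OR on uniform inputs since it implies the OR. -/

open Filter Topology

lemma uPr_mono {X : Type*} [Fintype X] {P Q : X → Prop} (h : ∀ x, P x → Q x) :
    uPr P ≤ uPr Q := by
  unfold uPr
  gcongr
  exact Fintype.card_subtype_mono P Q h

/-- The probability of the single string `x` under i.i.d. bits, each equal to `true` with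
probability `p`: the summand of `bPr`. -/
noncomputable def bitWeight {n : ℕ} (p : ℝ) (x : Fin n → Bool) : ℝ :=
  ∏ i, if x i then p else 1 - p

section BiasedProbability

variable {n : ℕ} {p : ℝ}

lemma bitWeight_nonneg (hp₀ : 0 ≤ p) (hp₁ : p ≤ 1) (x : Fin n → Bool) : 0 ≤ bitWeight p x :=
  Finset.prod_nonneg fun i _ => by split_ifs <;> linarith

lemma pow_wt_eq_prod {M : Type*} [CommMonoid M] (v : M) (x : Fin n → Bool) :
    v ^ wt x = ∏ i, if x i then v else 1 := by
  rw [wt, ← Finset.prod_const, Finset.prod_filter]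

lemma sum_bitWeight_mul_pow_wt (n : ℕ) (p v : ℝ) :
    ∑ x : Fin n → Bool, bitWeight p x * v ^ wt x = (p * v + (1 - p)) ^ n := by
  have factor (x : Fin n → Bool) :
      bitWeight p x * v ^ wt x = ∏ i, if x i then p * v else 1 - p := by
    rw [pow_wt_eq_prod, bitWeight, ← Finset.prod_mul_distrib]
    exact Finset.prod_congr rfl fun i _ => by split_ifs <;> simp
  simp only [factor]
  simpa using (Fintype.sum_pow (fun b : Bool => if b then p * v else 1 - p) n).symm

lemma sum_bitWeight (n : ℕ) (p : ℝ) : ∑ x : Fin n → Bool, bitWeight p x = 1 := by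
  simpa using sum_bitWeight_mul_pow_wt n p 1

lemma bPr_eq_sum_bitWeight (p : ℝ) (P : (Fin n → Bool) → Prop) :
    bPr p P = ∑ x, if P x then bitWeight p x else 0 := rfl

lemma bPr_add_bPr_not (p : ℝ) (P : (Fin n → Bool) → Prop) :
    bPr p P + bPr p (fun x => ¬P x) = 1 := by
  rw [bPr_eq_sum_bitWeight, bPr_eq_sum_bitWeight, ← Finset.sum_add_distrib, ← sum_bitWeight n p]
  exact Finset.sum_congr rfl fun x _ => by by_cases hx : P x <;> simp [hx]

lemma bPr_le_sum_bitWeight_mul (hp₀ : 0 ≤ p) (hp₁ : p ≤ 1) {P : (Fin n → Bool) → Prop}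
    {f : (Fin n → Bool) → ℝ} (hf : ∀ x, 0 ≤ f x) (hPf : ∀ x, P x → 1 ≤ f x) :
    bPr p P ≤ ∑ x, bitWeight p x * f x := by
  rw [bPr_eq_sum_bitWeight]
  refine Finset.sum_le_sum fun x _ => ?_
  split_ifs with hx
  · exact le_mul_of_one_le_right (bitWeight_nonneg hp₀ hp₁ x) (hPf x hx)
  · exact mul_nonneg (bitWeight_nonneg hp₀ hp₁ x) (hf x)

lemma bPr_mono (hp₀ : 0 ≤ p) (hp₁ : p ≤ 1) {P Q : (Fin n → Bool) → Prop}
    (h : ∀ x, P x → Q x) : bPr p P ≤ bPr p Q := by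
  have markov := bPr_le_sum_bitWeight_mul hp₀ hp₁ (P := P) (f := fun x => if Q x then 1 else 0)
    (fun x => by positivity) (fun x hx => by simp [h x hx])
  simpa only [bPr_eq_sum_bitWeight, mul_ite, mul_one, mul_zero] using markov

lemma bPr_exists_le_sum {ι : Type*} [Fintype ι] (hp₀ : 0 ≤ p) (hp₁ : p ≤ 1)
    (P : ι → (Fin n → Bool) → Prop) : bPr p (fun x => ∃ i, P i x) ≤ ∑ i, bPr p (P i) := by
  have nonneg (x : Fin n → Bool) (i : ι) : (0 : ℝ) ≤ if P i x then 1 else 0 := by positivity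
  calc bPr p (fun x => ∃ i, P i x)
      ≤ ∑ x, bitWeight p x * ∑ i, (if P i x then 1 else 0) := by
        refine bPr_le_sum_bitWeight_mul hp₀ hp₁
          (fun x => Finset.sum_nonneg fun i _ => nonneg x i) ?_
        rintro x ⟨i, hi⟩
        simpa only [if_pos hi] using
          Finset.single_le_sum (fun j _ => nonneg x j) (Finset.mem_univ i)
    _ = ∑ i, bPr p (P i) := by
        simp only [bPr_eq_sum_bitWeight, Finset.mul_sum, mul_ite, mul_one, mul_zero]
        exact Finset.sum_comm

lemma exists_div_card_le_bPr {ι : Type*} [Fintype ι] (hp₀ : 0 ≤ p) (hp₁ : p ≤ 1)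
    {P : ι → (Fin n → Bool) → Prop} {c : ℝ} (hc : 0 < c)
    (hP : c ≤ bPr p (fun x => ∃ i, P i x)) : ∃ i, c / Fintype.card ι ≤ bPr p (P i) := by
  have le_sum : c ≤ ∑ i, bPr p (P i) := hP.trans (bPr_exists_le_sum hp₀ hp₁ P)
  have nonempty : (Finset.univ : Finset ι).Nonempty :=
    Finset.nonempty_of_sum_ne_zero (hc.trans_le le_sum).ne'
  have card_ne_zero : (Fintype.card ι : ℝ) ≠ 0 := by
    exact_mod_cast nonempty.card_ne_zero
  obtain ⟨i, -, hi⟩ := Finset.exists_le_of_sum_le (f := fun _ => c / Fintype.card ι)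
    (g := fun i => bPr p (P i)) nonempty (by simpa [mul_div_cancel₀ _ card_ne_zero] using le_sum)
  exact ⟨i, hi⟩

end BiasedProbability

section Concentration

variable {p τ : ℝ}

lemma bPr_lt_wt_le_exp_pow (hp₀ : 0 ≤ p) (hp₁ : p ≤ 1) (τ : ℝ) {t : ℝ} (ht : 0 ≤ t) (n : ℕ) :
    bPr p (fun x : Fin n → Bool => τ * n < wt x) ≤ Real.exp (p * (Real.exp t - 1) - t * τ) ^ n := by
  have exp_eq (x : Fin n → Bool) :
      Real.exp (t * (wt x - τ * n)) = Real.exp t ^ wt x * Real.exp (-(t * τ)) ^ n := by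
    rw [← Real.exp_nat_mul, ← Real.exp_nat_mul, ← Real.exp_add]
    ring_nf
  calc bPr p (fun x : Fin n → Bool => τ * n < wt x)
      ≤ ∑ x : Fin n → Bool, bitWeight p x * Real.exp (t * (wt x - τ * n)) :=
        bPr_le_sum_bitWeight_mul hp₀ hp₁ (fun x => (Real.exp_pos _).le) fun x hx =>
          Real.one_le_exp (mul_nonneg ht (sub_nonneg.2 hx.le))
    _ = ((p * Real.exp t + (1 - p)) * Real.exp (-(t * τ))) ^ n := by
        simp only [exp_eq, ← mul_assoc, ← Finset.sum_mul, sum_bitWeight_mul_pow_wt, mul_pow]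
    _ ≤ (Real.exp (p * (Real.exp t - 1)) * Real.exp (-(t * τ))) ^ n := by
        have : 0 ≤ 1 - p := sub_nonneg.2 hp₁
        gcongr
        linarith [Real.add_one_le_exp (p * (Real.exp t - 1))]
    _ = Real.exp (p * (Real.exp t - 1) - t * τ) ^ n := by
        rw [← Real.exp_add, ← sub_eq_add_neg]

lemma exists_mul_exp_sub_one_lt_mul (hp₀ : 0 ≤ p) (hp₁ : p ≤ 1) (hpτ : p < τ) :
    ∃ t, 0 ≤ t ∧ p * (Real.exp t - 1) < t * τ := by
  obtain ⟨t, ht₀, ht⟩ := exists_between (lt_min one_pos (sub_pos.2 hpτ))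
  obtain ⟨ht₁, htτ⟩ := lt_min_iff.1 ht
  have exp_le : Real.exp t - 1 ≤ t + t ^ 2 := by
    have := Real.abs_exp_sub_one_sub_id_le (abs_le.2 ⟨by linarith, ht₁.le⟩)
    linarith [le_of_abs_le this]
  refine ⟨t, ht₀.le, ?_⟩
  calc p * (Real.exp t - 1) ≤ p * (t + t ^ 2) := by gcongr
    _ = t * (p + p * t) := by ring
    _ ≤ t * (p + t) := by gcongr; exact mul_le_of_le_one_left ht₀.le hp₁
    _ < t * τ := by gcongr; linarith

lemma eventually_le_bPr_wt_le (hp₀ : 0 ≤ p) (hp₁ : p ≤ 1) (hpτ : p < τ) {c : ℝ} (hc : c < 1) :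
    ∀ᶠ n : ℕ in atTop, c ≤ bPr p (fun x : Fin n → Bool => (wt x : ℝ) ≤ τ * n) := by
  obtain ⟨t, ht₀, ht⟩ := exists_mul_exp_sub_one_lt_mul hp₀ hp₁ hpτ
  have tail_tendsto : Tendsto (fun n : ℕ => Real.exp (p * (Real.exp t - 1) - t * τ) ^ n) atTop
      (𝓝 0) :=
    tendsto_pow_atTop_nhds_zero_of_lt_one (Real.exp_pos _).le
      (Real.exp_lt_one_iff.2 (sub_neg.2 ht))
  filter_upwards [tail_tendsto.eventually_lt_const (sub_pos.2 hc)] with n hn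
  have complement := bPr_add_bPr_not p (fun x : Fin n → Bool => (wt x : ℝ) ≤ τ * n)
  simp only [not_le] at complement
  linarith [bPr_lt_wt_le_exp_pow hp₀ hp₁ τ ht₀ n]

end Concentration

lemma half_div_card_bits (a : ℕ) :
    1 / 2 / (Fintype.card (Fin a → Bool) : ℝ) = 2 ^ (-((a : ℝ) + 1)) := by
  rw [Real.rpow_neg two_pos.le, Real.rpow_add_one two_ne_zero, Real.rpow_natCast]
  simp [div_eq_mul_inv, mul_comm]

theorem some_CNF_distinguishes_general {p τ c : ℝ} (hp₀ : 0 ≤ p) (hp₁ : p ≤ 1) (hpτ : p < τ)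
    (hc₀ : 0 < c) (hc₁ : c < 1) :
    ∃ n₀ : ℕ, ∀ n ≥ n₀, ∀ (ι : Type*) [Fintype ι] (P : ι → (Fin n → Bool) → Prop) (δ : ℝ),
      uPr (fun x => ∃ i, P i x) ≤ δ →
      (∀ x, (wt x : ℝ) ≤ τ * n → ∃ i, P i x) →
      ∃ i, uPr (P i) ≤ δ ∧ c / Fintype.card ι ≤ bPr p (P i) := by
  obtain ⟨n₀, hn₀⟩ := eventually_atTop.1 (eventually_le_bPr_wt_le hp₀ hp₁ hpτ hc₁)
  refine ⟨n₀, fun n hn ι _ P δ hδ hP => ?_⟩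
  obtain ⟨i, hi⟩ := exists_div_card_le_bPr hp₀ hp₁ hc₀
    ((hn₀ n hn).trans (bPr_mono hp₀ hp₁ hP))
  exact ⟨i, (uPr_mono fun x hx => ⟨i, hx⟩).trans hδ, hi⟩

/-- Claim 4.9: if an OR of `2^a` many `q`-CNFs is rarely one on uniform inputs but accepts
all strings of Hamming weight at most `(1/2-ε)n`, then some single CNF in the OR is rarely
one on uniform inputs yet non-negligibly often one on `1/3`-biased inputs. -/
theorem some_CNF_distinguishes :
    ∃ n₀ : ℕ,
      ∀ (n ℓ a q : ℕ) (ε : ℝ) (C : (Fin a → Bool) → BCNF n),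
        n ≥ n₀ → 0 < ε → ε ≤ 1 / 10 →
        (∀ α, BCNF.width (C α) q) →
        uPr (fun x : Fin n → Bool => ∃ α, BCNF.eval (C α) x = true) ≤
            (2 : ℝ) ^ (-((2 : ℝ) ^ (ℓ : ℕ) - (a : ℝ))) →
        (∀ x : Fin n → Bool, (wt x : ℝ) ≤ (1 / 2 - ε) * (n : ℝ) →
            ∃ α, BCNF.eval (C α) x = true) →
        ∃ α : Fin a → Bool,
          uPr (fun x : Fin n → Bool => BCNF.eval (C α) x = true) ≤
              (2 : ℝ) ^ (-((2 : ℝ) ^ (ℓ : ℕ) - (a : ℝ))) ∧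
          bPr (1 / 3) (fun x : Fin n → Bool => BCNF.eval (C α) x = true) ≥
              (2 : ℝ) ^ (-((a : ℝ) + 1)) := by
  obtain ⟨n₀, h⟩ := some_CNF_distinguishes_general (p := 1 / 3) (τ := 2 / 5) (c := 1 / 2)
    (by norm_num) (by norm_num) (by norm_num) (by norm_num) (by norm_num)
  refine ⟨n₀, fun n ℓ a q ε C hn _ hε _ hδ hC => ?_⟩
  rw [← half_div_card_bits]
  exact h n hn _ _ _ hδ fun x hx => hC x (hx.trans (by gcongr; linarith))
end
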